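/- Let A ∈ ℤ^{m×n} of full column rank, b ∈ ℤ^m, c ∈ ℚⁿ, n a multiple of 3, with the integer program max{cᵀx : Ax ≤ b, x ∈ ℤⁿ} feasible. Then for every optimal LP vertex x* there is an optimal integral solution z* with ‖x* − z*‖_∞ < (√2/3)·n·Δ_{n−1}(A). -/

import Mathlib

open Matrix

/-- `maxMinor A k` is the largest absolute value of a `k × k` minor of `A`. -/
def maxMinor {m n : ℕ} (A : Matrix (Fin m) (Fin n) ℤ) (k : ℕ) : ℕ :=
  Finset.sup (Finset.univ.filter fun p : (Fin k → Fin m) × (Fin k → Fin n) =>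
      Function.Injective p.1 ∧ Function.Injective p.2)
    fun p => ((A.submatrix p.1 p.2).det).natAbs


section PxHelpers

open MeasureTheory


/-- volume of a set in `ℝ^(k+2)` of the form planar set times box. -/
lemma px_volume_planar_box {k : ℕ} (D : Set (ℝ × ℝ)) (ρ : Fin k → ℝ) :
    volume {u : Fin (k + 2) → ℝ | (u 0, u 1) ∈ D ∧ ∀ j : Fin k, u j.succ.succ ∈ Set.Ioo (-ρ j) (ρ j)}
      = volume D * ∏ j, ENNReal.ofReal (2 * ρ j) := by
  have e1 := volume_preserving_piFinSuccAbove (fun _ : Fin (k + 2) => ℝ) 0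
  have e2 := volume_preserving_piFinSuccAbove (fun _ : Fin (k + 1) => ℝ) 0
  have e3 := (MeasurePreserving.id (volume : Measure ℝ)).prod e2
  have e4 := (volume_preserving_prodAssoc (α₁ := ℝ) (β₁ := ℝ) (γ₁ := Fin k → ℝ)).symm
  let eq3 : ℝ × (Fin (k+1) → ℝ) ≃ᵐ ℝ × (ℝ × (Fin k → ℝ)) :=
    (MeasurableEquiv.refl ℝ).prodCongr (MeasurableEquiv.piFinSuccAbove (fun _ : Fin (k + 1) => ℝ) 0)
  have e3' : MeasurePreserving eq3 volume volume := e3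
  let F := ((MeasurableEquiv.piFinSuccAbove (fun _ : Fin (k + 2) => ℝ) 0).trans eq3).trans
    (MeasurableEquiv.prodAssoc (α := ℝ) (β := ℝ) (γ := Fin k → ℝ)).symm
  have hF : MeasurePreserving F volume volume := e4.comp (e3'.comp e1)
  have hset : {u : Fin (k + 2) → ℝ | (u 0, u 1) ∈ D ∧
      ∀ j : Fin k, u j.succ.succ ∈ Set.Ioo (-ρ j) (ρ j)}
      = F ⁻¹' (D ×ˢ (Set.univ.pi fun j => Set.Ioo (-ρ j) (ρ j))) := by
    ext u
    simp only [Set.mem_ofPred_eq, Set.mem_preimage, Set.mem_prod, Set.mem_pi, Set.mem_univ,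
      forall_true_left]
    rfl
  rw [hset, hF.measure_preimage_equiv, Measure.volume_eq_prod, Measure.prod_prod, Real.volume_pi_Ioo]
  congr 1
  refine Finset.prod_congr rfl fun j _ => ?_
  congr 1; ring

/-- Minkowski's theorem for a body given by linear coordinates. -/
lemma px_minkowski {k : ℕ} (R : Matrix (Fin (k + 2)) (Fin (k + 2)) ℝ) (hR : R.det ≠ 0)
    (D : Set (ℝ × ℝ)) (hsymm : ∀ x ∈ D, -x ∈ D) (hconv : Convex ℝ D) (ρ : Fin k → ℝ)
    (hvol : ENNReal.ofReal (|R.det| * 2 ^ (k + 2)) < volume D * ∏ j, ENNReal.ofReal (2 * ρ j)) :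
    ∃ w : Fin (k + 2) → ℤ, w ≠ 0 ∧
      ((R *ᵥ (fun i => (w i : ℝ))) 0, (R *ᵥ (fun i => (w i : ℝ))) 1) ∈ D ∧
      ∀ j : Fin k, |(R *ᵥ (fun i => (w i : ℝ))) j.succ.succ| < ρ j := by
  set M : Set (Fin (k + 2) → ℝ) := {u | (u 0, u 1) ∈ D ∧
      ∀ j : Fin k, u j.succ.succ ∈ Set.Ioo (-ρ j) (ρ j)} with hM
  set T := Matrix.toLin' R with hT
  have hdet : LinearMap.det T = R.det := by rw [hT, LinearMap.det_toLin']
  have hvolM : volume M = _ := px_volume_planar_box D ρ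
  have hMsymm : ∀ x ∈ M, -x ∈ M := by
    intro x hx
    refine ⟨by simpa using hsymm _ hx.1, fun j => ?_⟩
    have := hx.2 j
    simp only [Set.mem_Ioo, Pi.neg_apply] at this ⊢
    constructor <;> linarith [this.1, this.2]
  have hMconv : Convex ℝ M := by
    intro x hx y hy a b ha hb hab
    refine ⟨by simpa using hconv hx.1 hy.1 ha hb hab, fun j => ?_⟩
    simpa using (convex_Ioo (-ρ j) (ρ j)) (hx.2 j) (hy.2 j) ha hb hab
  have hfund := ZSpan.isAddFundamentalDomain' (Pi.basisFun ℝ (Fin (k + 2))) volume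
  have hvF : volume (ZSpan.fundamentalDomain (Pi.basisFun ℝ (Fin (k + 2)))) = 1 := by
    rw [ZSpan.fundamentalDomain_pi_basisFun, volume_pi_pi]; simp
  have hlt : volume (ZSpan.fundamentalDomain (Pi.basisFun ℝ (Fin (k + 2)))) *
      2 ^ Module.finrank ℝ (Fin (k + 2) → ℝ) < volume (T ⁻¹' M) := by
    rw [hvF, Measure.addHaar_preimage_linearMap _ (by rw [hdet]; exact hR), hdet, hvolM]
    have hpos : 0 < |R.det| := abs_pos.2 hR
    have h2 := (ENNReal.mul_lt_mul_iff_right (a := ENNReal.ofReal |R.det⁻¹|)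
      (by simpa using hR) (by finiteness)).2 hvol
    rw [← ENNReal.ofReal_mul (abs_nonneg _), ← mul_assoc |R.det⁻¹|, ← abs_mul, inv_mul_cancel₀ hR,
      abs_one, one_mul, ENNReal.ofReal_pow (by norm_num)] at h2
    simpa using h2
  have : Countable (Submodule.span ℤ (Set.range (Pi.basisFun ℝ (Fin (k + 2))))).toAddSubgroup :=
    inferInstanceAs (Countable (Submodule.span ℤ (Set.range (Pi.basisFun ℝ (Fin (k + 2))))))
  obtain ⟨x, hx0, hxM⟩ := exists_ne_zero_mem_lattice_of_measure_mul_two_pow_lt_measure hfund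
    (s := T ⁻¹' M) (by intro x hx; simpa using hMsymm _ hx)
    (hMconv.linear_preimage T) hlt
  have hxmem := x.2
  have hint : ∀ i, ∃ c : ℤ, (c : ℝ) = (x : Fin (k + 2) → ℝ) i := by
    have := ((Pi.basisFun ℝ (Fin (k + 2))).mem_span_iff_repr_mem ℤ (x : Fin (k + 2) → ℝ)).1 hxmem
    intro i
    simpa using this i
  choose w hw using hint
  have hwx : (fun i => (w i : ℝ)) = (x : Fin (k + 2) → ℝ) := funext hw
  refine ⟨w, ?_, ?_⟩
  · rintro rfl
    apply hx0
    ext i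
    rw [← hw i]; simp
  · rw [hwx]
    have h : T x ∈ M := hxM
    rw [hT, Matrix.toLin'_apply] at h
    exact ⟨h.1, fun j => abs_lt.2 (h.2 j)⟩


lemma px_std_triangle : volume {x : ℝ × ℝ | 0 < x.1 ∧ 0 < x.2 ∧ x.1 + x.2 < 1}
    = ENNReal.ofReal (1 / 2) := by
  have h : {x : ℝ × ℝ | 0 < x.1 ∧ 0 < x.2 ∧ x.1 + x.2 < 1}
      = regionBetween (fun _ => 0) (fun x => 1 - x) (Set.Ioo (0:ℝ) 1) := by
    ext ⟨a, b⟩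
    simp only [regionBetween, Set.mem_ofPred_eq, Set.mem_Ioo]
    constructor
    · rintro ⟨h1, h2, h3⟩; refine ⟨⟨h1, by linarith⟩, h2, by linarith⟩
    · rintro ⟨⟨h1, h2⟩, h3, h4⟩; exact ⟨h1, h3, by linarith⟩
  rw [h, Measure.volume_eq_prod, volume_regionBetween_eq_integral]
  · congr 1
    rw [← integral_Ioc_eq_integral_Ioo, ← intervalIntegral.integral_of_le zero_le_one]
    simp only [Pi.sub_apply, sub_zero]
    rw [intervalIntegral.integral_sub (by simp) (by simp)]
    simp; norm_num
  · exact integrableOn_zero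
  · exact ((continuous_const.sub continuous_id).integrableOn_Icc (a := 0) (b := 1)).mono_set
      Set.Ioo_subset_Icc_self
  · exact measurableSet_Ioo
  · intro x hx; simpa using hx.2.le

/-- open triangle with vertices `0`, `u`, `v`. -/
def pxTri (u v : ℝ × ℝ) : Set (ℝ × ℝ) :=
  {x | ∃ s t : ℝ, 0 < s ∧ 0 < t ∧ s + t < 1 ∧ x = (s * u.1 + t * v.1, s * u.2 + t * v.2)}

lemma px_tri_volume (u v : ℝ × ℝ) :
    volume (pxTri u v) = ENNReal.ofReal (|u.1 * v.2 - u.2 * v.1| / 2) := by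
  let b := Module.Basis.finTwoProd ℝ
  let f : ℝ × ℝ →ₗ[ℝ] ℝ × ℝ := Matrix.toLin b b !![u.1, v.1; u.2, v.2]
  have hf : pxTri u v = f '' {x : ℝ × ℝ | 0 < x.1 ∧ 0 < x.2 ∧ x.1 + x.2 < 1} := by
    have hfx : ∀ x : ℝ × ℝ, f x = (x.1 * u.1 + x.2 * v.1, x.1 * u.2 + x.2 * v.2) := by
      intro x
      simp only [f, b]
      rw [Matrix.toLin_finTwoProd_apply]
      ext <;> simp <;> ring
    ext x
    simp only [pxTri, Set.mem_ofPred_eq, Set.mem_image, hfx]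
    constructor
    · rintro ⟨s, t, hs, ht, hst, rfl⟩; exact ⟨(s, t), ⟨hs, ht, hst⟩, rfl⟩
    · rintro ⟨⟨s, t⟩, ⟨hs, ht, hst⟩, rfl⟩; exact ⟨s, t, hs, ht, hst, rfl⟩
  rw [hf, Measure.addHaar_image_linearMap, px_std_triangle, ← ENNReal.ofReal_mul (abs_nonneg _)]
  congr 1
  simp only [f]
  rw [LinearMap.det_toLin, Matrix.det_fin_two_of]
  rw [show u.1 * v.2 - v.1 * u.2 = u.1 * v.2 - u.2 * v.1 by ring]
  ring

lemma px_tri_measurable (u v : ℝ × ℝ) (h : u.1 * v.2 - u.2 * v.1 ≠ 0) :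
    MeasurableSet (pxTri u v) := by
  set δ := u.1 * v.2 - u.2 * v.1 with hδ
  have : pxTri u v = {x : ℝ × ℝ | 0 < (x.1 * v.2 - x.2 * v.1) / δ} ∩
      {x : ℝ × ℝ | 0 < (u.1 * x.2 - u.2 * x.1) / δ} ∩
      {x : ℝ × ℝ | (x.1 * v.2 - x.2 * v.1) / δ + (u.1 * x.2 - u.2 * x.1) / δ < 1} := by
    ext x
    simp only [pxTri, Set.mem_ofPred_eq, Set.mem_inter_iff]
    constructor
    · rintro ⟨s, t, hs, ht, hst, rfl⟩
      have e1 : ((s * u.1 + t * v.1) * v.2 - (s * u.2 + t * v.2) * v.1) / δ = s := by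
        rw [div_eq_iff h, hδ]; ring
      have e2 : (u.1 * (s * u.2 + t * v.2) - u.2 * (s * u.1 + t * v.1)) / δ = t := by
        rw [div_eq_iff h, hδ]; ring
      simp only [e1, e2]
      exact ⟨⟨hs, ht⟩, hst⟩
    · rintro ⟨⟨h1, h2⟩, h3⟩
      refine ⟨_, _, h1, h2, h3, ?_⟩
      ext
      · field_simp; rw [hδ]; ring
      · field_simp; rw [hδ]; ring
  rw [this]
  refine ((measurableSet_lt (by fun_prop) (by fun_prop)).inter
    (measurableSet_lt (by fun_prop) (by fun_prop))).inter
    (measurableSet_lt (by fun_prop) (by fun_prop))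

/-- Area bound (a quantitative planar Mahler-type inequality). -/
lemma px_area {ι : Type*} (P Q : ι → ℝ) (p q : ℝ) (hp : 0 < p) (hq : 0 ≤ q) (hh : 1 ≤ p + q)
    (h1 : ∀ i, |P i| ≤ 1) (h2 : ∀ i, |Q i| ≤ 1) (h3 : ∀ i, |P i + Q i| ≤ p + q)
    (h4 : ∀ i, |p * Q i - q * P i| ≤ 1) :
    ENNReal.ofReal (2 / (p + q) + (p + q)) ≤
      volume {x : ℝ × ℝ | ∀ i, |P i * x.1 + Q i * x.2| < 1} := by
  set D := {x : ℝ × ℝ | ∀ i, |P i * x.1 + Q i * x.2| < 1} with hD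
  set h := p + q with hhdef
  have hpos : 0 < h := by linarith
  have key : ∀ u v : ℝ × ℝ, (∀ i, |P i * u.1 + Q i * u.2| ≤ 1) →
      (∀ i, |P i * v.1 + Q i * v.2| ≤ 1) → pxTri u v ⊆ D := by
    rintro u v hu hv x ⟨s, t, hs, ht, hst, rfl⟩ i
    have e : P i * (s * u.1 + t * v.1) + Q i * (s * u.2 + t * v.2)
      = s * (P i * u.1 + Q i * u.2) + t * (P i * v.1 + Q i * v.2) := by ring
    simp only [e]
    have a1 := abs_le.1 (hu i)
    have a2 := abs_le.1 (hv i)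
    rw [abs_lt]
    constructor <;> nlinarith
  let e1 : ℝ × ℝ := (1, 0)
  let g : ℝ × ℝ := (1 / h, 1 / h)
  let e2 : ℝ × ℝ := (0, 1)
  let r : ℝ × ℝ := (-q, p)
  let e3 : ℝ × ℝ := (-1, 0)
  have he1 : ∀ i, |P i * e1.1 + Q i * e1.2| ≤ 1 := by intro i; simpa [e1] using h1 i
  have he2 : ∀ i, |P i * e2.1 + Q i * e2.2| ≤ 1 := by intro i; simpa [e2] using h2 i
  have he3 : ∀ i, |P i * e3.1 + Q i * e3.2| ≤ 1 := by intro i; simpa [e3] using h1 i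
  have hg : ∀ i, |P i * g.1 + Q i * g.2| ≤ 1 := by
    intro i
    have : P i * g.1 + Q i * g.2 = (P i + Q i) / h := by simp only [g]; ring
    rw [this, abs_div, abs_of_pos hpos, div_le_one hpos]; exact h3 i
  have hr : ∀ i, |P i * r.1 + Q i * r.2| ≤ 1 := by
    intro i
    have : P i * r.1 + Q i * r.2 = p * Q i - q * P i := by simp only [r]; ring
    rw [this]; exact h4 i
  have hhi : 0 < 1 / h := by positivity
  -- the upper half
  set A1 := pxTri e1 g
  set A2 := pxTri g e2
  set A3 := pxTri e2 r
  set A4 := pxTri r e3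
  have v1 : volume A1 = ENNReal.ofReal (1 / h / 2) := by
    rw [px_tri_volume]; congr 2; simp only [e1, g]; rw [abs_of_nonneg] <;> simp <;> positivity
  have v2 : volume A2 = ENNReal.ofReal (1 / h / 2) := by
    rw [px_tri_volume]; congr 2; simp only [e2, g]; rw [abs_of_nonneg] <;> simp <;> positivity
  have v3 : volume A3 = ENNReal.ofReal (q / 2) := by
    rw [px_tri_volume]; congr 2; simp only [e2, r]; rw [abs_of_nonneg] <;> simp <;> positivity
  have v4 : volume A4 = ENNReal.ofReal (p / 2) := by
    rw [px_tri_volume]; congr 2; simp only [e3, r]; rw [abs_of_nonneg] <;> simp <;> positivity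
  have m1 : MeasurableSet A1 := px_tri_measurable _ _ (by simp [e1, g]; positivity)
  have m2 : MeasurableSet A2 := px_tri_measurable _ _ (by simp [e2, g]; positivity)
  have m4 : MeasurableSet A4 := px_tri_measurable _ _ (by simp [e3, r]; positivity)
  have s1 : ∀ x ∈ A1, 0 < x.2 ∧ x.2 < x.1 := by
    rintro x ⟨s, t, hs, ht, hst, rfl⟩
    simp only [e1, g]
    have : 0 < t * (1 / h) := by positivity
    constructor <;> nlinarith
  have s2 : ∀ x ∈ A2, 0 < x.1 ∧ x.1 < x.2 := by
    rintro x ⟨s, t, hs, ht, hst, rfl⟩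
    simp only [e2, g]
    have : 0 < s * (1 / h) := by positivity
    constructor <;> nlinarith
  have s3 : ∀ x ∈ A3, x.1 ≤ 0 ∧ 0 < x.2 ∧ -q * x.2 - p * x.1 ≤ 0 := by
    rintro x ⟨s, t, hs, ht, hst, rfl⟩
    simp only [e2, r]
    have a1 : 0 ≤ t * q := by positivity
    have a2 : 0 < t * p := by positivity
    have a3 : 0 ≤ s * q := by positivity
    refine ⟨?_, ?_, ?_⟩ <;> nlinarith
  have s4 : ∀ x ∈ A4, x.1 < 0 ∧ 0 < x.2 ∧ 0 < -q * x.2 - p * x.1 := by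
    rintro x ⟨s, t, hs, ht, hst, rfl⟩
    simp only [e3, r]
    have a1 : 0 ≤ s * q := by positivity
    have a2 : 0 < t * p := by positivity
    have a3 : 0 < s * p := by positivity
    refine ⟨?_, ?_, ?_⟩ <;> nlinarith
  set U := ((A3 ∪ A4) ∪ A1) ∪ A2 with hU
  have hvU : volume U = ENNReal.ofReal (1 / h + h / 2) := by
    have d1 : Disjoint A3 A4 := Set.disjoint_left.2 fun x hx hx' => by
      linarith [(s3 x hx).2.2, (s4 x hx').2.2]
    have d2 : Disjoint (A3 ∪ A4) A1 := Set.disjoint_left.2 fun x hx hx' => by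
      have := s1 x hx'
      rcases hx with hx | hx
      · linarith [(s3 x hx).1]
      · linarith [(s4 x hx).1]
    have d3 : Disjoint ((A3 ∪ A4) ∪ A1) A2 := Set.disjoint_left.2 fun x hx hx' => by
      have := s2 x hx'
      rcases hx with (hx | hx) | hx
      · linarith [(s3 x hx).1]
      · linarith [(s4 x hx).1]
      · linarith [(s1 x hx).2]
    rw [hU, measure_union d3 m2, measure_union d2 m1, measure_union d1 m4, v1, v2, v3, v4,
      ← ENNReal.ofReal_add (by positivity) (by positivity),
      ← ENNReal.ofReal_add (by positivity) (by positivity),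
      ← ENNReal.ofReal_add (by positivity) (by positivity)]
    congr 1; rw [hhdef]; ring
  have hUy : ∀ x ∈ U, 0 < x.2 := by
    rintro x (((hx | hx) | hx) | hx)
    · exact (s3 x hx).2.1
    · exact (s4 x hx).2.1
    · exact (s1 x hx).1
    · have := s2 x hx; linarith
  have hUD : U ⊆ D := by
    refine Set.union_subset (Set.union_subset (Set.union_subset ?_ ?_) ?_) ?_
    · exact key _ _ he2 hr
    · exact key _ _ hr he3
    · exact key _ _ he1 hg
    · exact key _ _ hg he2
  have hnD : -U ⊆ D := by
    intro x hx i
    have := hUD hx i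
    have e : P i * x.1 + Q i * x.2 = -(P i * (-x).1 + Q i * (-x).2) := by
      simp only [Prod.fst_neg, Prod.snd_neg]; ring
    rw [e, abs_neg]; exact this
  have hsub : (U ∩ {x | 0 < x.2}) ∪ -U ⊆ D :=
    Set.union_subset (Set.inter_subset_left.trans hUD) hnD
  have hvn : volume (-U) = volume U := Measure.measure_neg _ _
  have hdisj : Disjoint (-U) U := Set.disjoint_left.2 fun x hx hx' => by
    have a := hUy _ hx'
    have b := hUy _ (show -x ∈ U from hx)
    simp at b; linarith
  have hnull : NullMeasurableSet U volume := by
    have m3 : NullMeasurableSet A3 volume := by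
      rcases eq_or_ne q 0 with h0 | h0
      · apply NullMeasurableSet.of_null; rw [v3, h0]; simp
      · exact (px_tri_measurable _ _ (by simpa [e2, r] using h0)).nullMeasurableSet
    exact ((m3.union m4.nullMeasurableSet).union m1.nullMeasurableSet).union m2.nullMeasurableSet
  calc ENNReal.ofReal (2 / h + h) = volume (-U) + volume U := by
        rw [hvn, hvU, ← ENNReal.ofReal_add (by positivity) (by positivity)]; congr 1; ring
    _ = volume (-U ∪ U) := (measure_union₀ hnull hdisj.aedisjoint).symm
    _ ≤ volume D := measure_mono (Set.union_subset hnD hUD)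

/-- determinant with two distinguished rows. -/
def pxG {k : ℕ} (rest : Fin k → (Fin (k + 2) → ℤ)) (x y : Fin (k + 2) → ℤ) : ℤ :=
  (Matrix.of (vecCons x (vecCons y rest))).det

lemma px_cramer {k : ℕ} (rest : Fin k → (Fin (k + 2) → ℤ)) (x0 y0 x : Fin (k + 2) → ℤ) :
    ∃ c : Fin k → ℤ, pxG rest x0 y0 • x =
      pxG rest x y0 • x0 + pxG rest x0 x • y0 + ∑ a, c a • rest a := by
  set R := Matrix.of (vecCons x0 (vecCons y0 rest)) with hR
  have h := mulVec_cramer Rᵀ x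
  have h0 : cramer Rᵀ x 0 = pxG rest x y0 := by
    rw [cramer_transpose_apply, pxG]
    congr 1
    ext a b
    refine Fin.cases ?_ (fun a => ?_) a
    · simp
    · rw [updateRow_ne (Fin.succ_ne_zero a)]; simp [hR]
  have h1 : cramer Rᵀ x 1 = pxG rest x0 x := by
    rw [cramer_transpose_apply, pxG]
    congr 1
    ext a b
    refine Fin.cases ?_ (fun a => ?_) a
    · rw [updateRow_ne (by simp)]; simp [hR]
    · refine Fin.cases ?_ (fun a => ?_) a
      · change (R.updateRow 1 x) 1 b = _
        rw [updateRow_self]; simp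
      · rw [updateRow_ne (by simp [Fin.ext_iff])]; simp [hR]
  refine ⟨fun a => cramer Rᵀ x a.succ.succ, ?_⟩
  rw [det_transpose] at h
  rw [pxG, ← hR, ← h, ← h0, ← h1]
  ext b
  simp only [mulVec, dotProduct, Fin.sum_univ_succ, transpose_apply, Pi.add_apply, Pi.smul_apply,
    Finset.sum_apply, smul_eq_mul]
  simp only [hR, of_apply, cons_val_zero, cons_val_succ, Fin.succ_zero_eq_one]
  simp only [← add_assoc, mul_comm]
  rfl

lemma px_plucker {k : ℕ} (rest : Fin k → (Fin (k + 2) → ℤ)) (x0 y0 x y : Fin (k + 2) → ℤ) :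
    pxG rest x0 y0 * pxG rest x y =
      pxG rest x y0 * pxG rest x0 y - pxG rest x0 x * pxG rest y y0 := by
  obtain ⟨c, hc⟩ := px_cramer rest x0 y0 x
  let L : (Fin (k + 2) → ℤ) →ₗ[ℤ] ℤ :=
    (detRowAlternating (n := Fin (k+2)) (R := ℤ)).toMultilinearMap.toLinearMap (vecCons 0 (vecCons y rest)) 0
  have hL : ∀ v, L v = pxG rest v y := by
    intro v
    simp only [L, MultilinearMap.toLinearMap_apply, pxG]
    change Matrix.det _ = _
    congr 1
    ext a b
    refine Fin.cases ?_ (fun a => ?_) a <;> simp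
  have h2 := congrArg L hc
  rw [map_add, map_add, map_sum, map_smul, map_smul, map_smul] at h2
  simp only [hL, smul_eq_mul] at h2
  have hz : ∀ a, pxG rest (rest a) y = 0 := by
    intro a
    apply det_zero_of_row_eq (i := 0) (j := a.succ.succ) (by simp [Fin.ext_iff])
    ext b; simp
  have hsw : pxG rest y0 y = - pxG rest y y0 := by
    have h3 := det_permute (Equiv.swap (0 : Fin (k + 2)) 1)
      (Matrix.of (vecCons y (vecCons y0 rest)))
    rw [Equiv.Perm.sign_swap (by simp)] at h3
    simp only [pxG]
    have h4 : (Matrix.of (vecCons y (vecCons y0 rest))).submatrix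
        (Equiv.swap (0 : Fin (k + 2)) 1) id = Matrix.of (vecCons y0 (vecCons y rest)) := by
      ext a b
      refine Fin.cases ?_ (fun a => ?_) a
      · rw [submatrix_apply, Equiv.swap_apply_left]; rfl
      · refine Fin.cases ?_ (fun a => ?_) a
        · rw [submatrix_apply]
          change Matrix.of (vecCons y (vecCons y0 rest)) (Equiv.swap (0 : Fin (k + 2)) 1 1) b = _
          rw [Equiv.swap_apply_right]; rfl
        · rw [submatrix_apply, Equiv.swap_apply_of_ne_of_ne (by simp)
            (by simp [Fin.ext_iff])]; rfl
    rw [h4] at h3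
    rw [h3]; simp
  have hz' : ∑ a, pxG rest (c a • rest a) y = 0 := by
    refine Finset.sum_eq_zero fun a _ => ?_
    rw [← hL, map_smul, hL, hz, smul_zero]
  rw [h2, hsw, hz']
  ring

lemma px_minor_le {m d : ℕ} (A : Matrix (Fin m) (Fin (d + 3)) ℤ) (l : Fin d → Fin m)
    (t : Fin (d + 3)) (i j : Fin m) :
    |pxG (vecCons (Pi.single t 1) (fun a => A (l a))) (A i) (A j)| ≤ (maxMinor A (d + 2) : ℤ) := by
  rw [pxG, det_succ_row _ 2, Finset.sum_eq_single t]
  · have : (Matrix.of (vecCons (A i) (vecCons (A j) (vecCons (Pi.single t 1)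
        (fun a => A (l a)))))) 2 t = (1 : ℤ) := by
      change (Pi.single t 1 : Fin (d + 3) → ℤ) t = 1
      simp
    rw [this, mul_one, abs_mul, abs_pow, abs_neg, abs_one, one_pow, one_mul]
    set f : Fin (d + 2) → Fin m := vecCons i (vecCons j l) with hf
    have hs : ((Matrix.of (vecCons (A i) (vecCons (A j) (vecCons (Pi.single t 1)
        (fun a => A (l a)))))).submatrix (Fin.succAbove 2) t.succAbove)
        = A.submatrix f t.succAbove := by
      ext a b
      refine Fin.cases ?_ (fun a => ?_) a
      · rfl
      · refine Fin.cases ?_ (fun a => ?_) a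
        · rfl
        · have : (Fin.succAbove 2 a.succ.succ : Fin (d + 3)) = a.succ.succ.succ := by
            rw [Fin.succAbove_of_le_castSucc]
            rw [Fin.le_def]; change 2 % (d + 3) ≤ a.val + 1 + 1
            rw [Nat.mod_eq_of_lt (by omega)]; omega
          simp [this, hf]
    rw [hs]
    by_cases hinj : Function.Injective f
    · rw [Int.abs_eq_natAbs]
      exact_mod_cast Finset.le_sup (f := fun p : (Fin (d+2) → Fin m) × (Fin (d+2) → Fin (d+3)) =>
        ((A.submatrix p.1 p.2).det).natAbs) (b := (f, t.succAbove))
        (by simp [hinj, Fin.succAbove_right_injective])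
    · rw [Function.Injective] at hinj
      push Not at hinj
      obtain ⟨a, b, hab, hne⟩ := hinj
      rw [det_zero_of_row_eq hne (by ext c; simp [hab])]
      simp
  · intro b _ hb
    have : (Matrix.of (vecCons (A i) (vecCons (A j) (vecCons (Pi.single t 1)
        (fun a => A (l a)))))) 2 b = (0 : ℤ) := by
      change (Pi.single t 1 : Fin (d + 3) → ℤ) b = 0
      simp [hb]
    rw [this]; ring
  · simp

/-- real version of a row. -/
def pxRow {m n : ℕ} (A : Matrix (Fin m) (Fin n) ℤ) (i : Fin m) : Fin n → ℝ := fun j => (A i j : ℝ)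

lemma px_exists_kernel {n : ℕ} (W : Submodule ℝ (Fin n → ℝ)) (hW : W ≠ ⊤) :
    ∃ e : Fin n → ℝ, e ≠ 0 ∧ ∀ w ∈ W, w ⬝ᵥ e = 0 := by
  obtain ⟨f, hf0, hf⟩ := W.exists_le_ker_of_lt_top hW.lt_top
  obtain ⟨e, rfl⟩ := (dotProductEquiv ℝ (Fin n)).surjective f
  refine ⟨e, ?_, fun w hw => ?_⟩
  · rintro rfl; simp at hf0
  · have := hf hw
    rw [LinearMap.mem_ker] at this
    rw [dotProduct_comm]; simpa using this

lemma px_span_dot {n : ℕ} (s : Set (Fin n → ℝ)) (y : Fin n → ℝ) (h : ∀ v ∈ s, v ⬝ᵥ y = 0) :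
    ∀ v ∈ Submodule.span ℝ s, v ⬝ᵥ y = 0 := by
  intro v hv
  induction hv using Submodule.span_induction with
  | mem x hx => exact h x hx
  | zero => simp
  | add x y _ _ hx hy => rw [add_dotProduct, hx, hy, add_zero]
  | smul a x _ hx => rw [smul_dotProduct, hx, smul_zero]

lemma px_extend {m n k : ℕ} (A : Matrix (Fin m) (Fin n) ℤ)
    (hspan : ∀ x : Fin n → ℝ, (∀ i, pxRow A i ⬝ᵥ x = 0) → x = 0)
    (v : Fin k → (Fin n → ℝ)) (hv : LinearIndependent ℝ v) (hk : k < n) :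
    ∃ i, LinearIndependent ℝ (vecCons (pxRow A i) v : Fin (k + 1) → (Fin n → ℝ)) := by
  have hW : Submodule.span ℝ (Set.range v) ≠ ⊤ := by
    intro h
    have := finrank_span_eq_card hv
    rw [h] at this
    simp at this
    omega
  obtain ⟨e, he0, he⟩ := px_exists_kernel _ hW
  have : ∃ i, pxRow A i ⬝ᵥ e ≠ 0 := by
    by_contra hcon
    push Not at hcon
    exact he0 (hspan e hcon)
  obtain ⟨i, hi⟩ := this
  exact ⟨i, linearIndependent_finCons.2 ⟨hv, fun hmem => hi (he _ hmem)⟩⟩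

lemma px_exists_pair {m d : ℕ} (A : Matrix (Fin m) (Fin (d + 3)) ℤ)
    (hspan : ∀ x : Fin (d + 3) → ℝ, (∀ i, pxRow A i ⬝ᵥ x = 0) → x = 0)
    (l : Fin d → Fin m) (hl : LinearIndependent ℝ (fun a => pxRow A (l a)))
    (t : Fin (d + 3)) (y : Fin (d + 3) → ℝ) (hly : ∀ a, pxRow A (l a) ⬝ᵥ y = 0) (hy : y t ≠ 0) :
    ∃ i j, pxG (vecCons (Pi.single t 1) (fun a => A (l a))) (A i) (A j) ≠ 0 := by
  have h1 : LinearIndependent ℝ (vecCons (Pi.single t 1) (fun a => pxRow A (l a)) :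
      Fin (d + 1) → (Fin (d + 3) → ℝ)) := by
    refine linearIndependent_finCons.2 ⟨hl, fun hmem => ?_⟩
    have := px_span_dot _ y (by rintro _ ⟨a, rfl⟩; exact hly a) _ hmem
    rw [single_dotProduct, one_mul] at this
    exact hy this
  obtain ⟨j, hj⟩ := px_extend A hspan _ h1 (by omega)
  obtain ⟨i, hi⟩ := px_extend A hspan _ hj (by omega)
  refine ⟨i, j, fun h0 => ?_⟩
  set M : Matrix (Fin (d + 3)) (Fin (d + 3)) ℤ :=
    Matrix.of (vecCons (A i) (vecCons (A j) (vecCons (Pi.single t 1) (fun a => A (l a))))) with hM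
  have hMr : (M.map (Int.cast : ℤ → ℝ)).row = (vecCons (pxRow A i) (vecCons (pxRow A j)
      (vecCons (Pi.single t 1) (fun a => pxRow A (l a))))) := by
    funext a b
    refine Fin.cases ?_ (fun a => ?_) a
    · simp [hM, pxRow]
    · refine Fin.cases ?_ (fun a => ?_) a
      · simp [hM, pxRow]
      · refine Fin.cases ?_ (fun a => ?_) a
        · simp [hM, Pi.single_apply]
        · simp [hM, pxRow]
  have hu : IsUnit (M.map (Int.cast : ℤ → ℝ)) := by
    rw [← Matrix.linearIndependent_rows_iff_isUnit, hMr]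
    exact hi
  rw [Matrix.isUnit_iff_isUnit_det, isUnit_iff_ne_zero] at hu
  apply hu
  have : (M.map (Int.cast : ℤ → ℝ)).det = ((M.det : ℤ) : ℝ) := (Int.cast_det M).symm
  rw [this]
  have : M.det = 0 := h0
  rw [this]; simp

lemma px_amgm (h : ℝ) (hpos : 0 < h) (hne : h ≠ √2) : 2 * √2 < 2 / h + h := by
  have h2 : √2 * √2 = 2 := Real.mul_self_sqrt (by norm_num)
  have : 2 / h + h - 2 * √2 = (h - √2) ^ 2 / h := by
    field_simp; linear_combination (-1 : ℝ) * h2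
  have : 0 < (h - √2) ^ 2 / h := by
    have : h - √2 ≠ 0 := sub_ne_zero.2 hne
    positivity
  linarith

/-- planar normalisation -/
lemma px_planar {m : ℕ} (G : Fin m → Fin m → ℤ) (i0 j0 : Fin m) (hδ : G i0 j0 ≠ 0)
    (hmax : ∀ i j, |G i j| ≤ |G i0 j0|) (hself : ∀ i, G i i = 0)
    (hpl : ∀ i j, G i0 j0 * G i j = G i j0 * G i0 j - G i0 i * G j j0) :
    ENNReal.ofReal (2 * √2) < MeasureTheory.volume {x : ℝ × ℝ | ∀ i,
      |((G i j0 : ℝ) / (G i0 j0 : ℝ)) * x.1 + ((G i0 i : ℝ) / (G i0 j0 : ℝ)) * x.2| < 1} := by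
  set δ : ℝ := (G i0 j0 : ℝ) with hδdef
  have hδ' : δ ≠ 0 := by rw [hδdef]; exact_mod_cast hδ
  have hδa : 0 < |δ| := abs_pos.2 hδ'
  set P : Fin m → ℝ := fun i => (G i j0 : ℝ) / δ with hP
  set Q : Fin m → ℝ := fun i => (G i0 i : ℝ) / δ with hQ
  have hb : ∀ i j, |(G i j : ℝ) / δ| ≤ 1 := by
    intro i j
    rw [abs_div, div_le_one hδa, hδdef]
    exact_mod_cast hmax i j
  have hPl : ∀ i j, P i * Q j - Q i * P j = (G i j : ℝ) / δ := by
    intro i j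
    have h : δ * (G i j : ℝ) = (G i j0 : ℝ) * (G i0 j : ℝ) - (G i0 i : ℝ) * (G j j0 : ℝ) := by
      rw [hδdef]; exact_mod_cast hpl i j
    simp only [hP, hQ]
    field_simp
    linarith
  have hP0 : P i0 = 1 := by simp only [hP]; exact div_self hδ'
  have hQ0 : Q i0 = 0 := by simp only [hQ, hself]; simp
  obtain ⟨i1, hi1⟩ : ∃ i1, ∀ i, |P i + Q i| ≤ |P i1 + Q i1| := by
    have : Nonempty (Fin m) := ⟨i0⟩
    exact Finite.exists_max fun i => |P i + Q i|
  have hge : 1 ≤ |P i1 + Q i1| := by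
    have := hi1 i0
    rwa [hP0, hQ0, add_zero, abs_one] at this
  have hex : ∃ p q : ℝ, 0 < p ∧ 0 ≤ q ∧ 1 ≤ p + q ∧ (∀ i, |P i + Q i| ≤ p + q) ∧
      (∀ i, |p * Q i - q * P i| ≤ 1) ∧ ∃ r : ℚ, p + q = r := by
    have hrat : ∀ i, ∃ r : ℚ, P i + Q i = r := fun i =>
      ⟨(G i j0 : ℚ) / (G i0 j0 : ℚ) + (G i0 i : ℚ) / (G i0 j0 : ℚ), by
        simp only [hP, hQ, hδdef]; push_cast; ring⟩
    have hp1 := abs_le.1 (hb i1 j0)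
    have hq1 := abs_le.1 (hb i0 i1)
    change -1 ≤ P i1 ∧ P i1 ≤ 1 at hp1
    change -1 ≤ Q i1 ∧ Q i1 ≤ 1 at hq1
    by_cases h0 : P i1 = 0
    · refine ⟨1, 0, one_pos, le_rfl, by norm_num, fun i => ?_, fun i => ?_, 1, by norm_num⟩
      · refine (hi1 i).trans ?_
        rw [h0, zero_add, add_zero]; exact abs_le.2 hq1
      · simpa using hb i0 i
    · rcases le_total 0 (P i1 + Q i1) with hs | hs
      · rw [abs_of_nonneg hs] at hge hi1
        refine ⟨P i1, Q i1, lt_of_le_of_ne (by linarith) (Ne.symm h0), by linarith, hge, hi1,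
          fun i => ?_, hrat i1⟩
        rw [hPl]; exact hb _ _
      · rw [abs_of_nonpos hs] at hge hi1
        obtain ⟨r, hr⟩ := hrat i1
        refine ⟨-P i1, -Q i1, lt_of_le_of_ne (by linarith) (fun h => h0 (by linarith)),
          by linarith, by linarith, fun i => (hi1 i).trans (by linarith), fun i => ?_, -r, ?_⟩
        · rw [show -P i1 * Q i - -Q i1 * P i = -(P i1 * Q i - Q i1 * P i) by ring, abs_neg, hPl]
          exact hb _ _
        · push_cast; linarith
  obtain ⟨p, q, hp, hq, hpq, h3, h4, r, hr⟩ := hex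
  refine lt_of_lt_of_le ?_ (px_area P Q p q hp hq hpq (fun i => hb i j0) (fun i => hb i0 i) h3 h4)
  have hpos : 0 < p + q := by linarith
  rw [ENNReal.ofReal_lt_ofReal_iff (by positivity)]
  apply px_amgm _ hpos
  rw [hr]
  intro h
  exact irrational_sqrt_two ⟨r, h⟩

lemma px_cancel8 (D y : ℝ) (k : ℕ) (V : ENNReal) (hD : 0 ≤ D) (hDy : √2 * D ≤ y) (hD0 : 0 < D)
   (hV : ENNReal.ofReal (2*√2) < V) : 
   ENNReal.ofReal (D * 2^(k+1+2)) < V * ∏ j : Fin (k+1), ENNReal.ofReal (2 * (vecCons y (fun _ => 1) : Fin (k+1) → ℝ) j) := by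
  have hy : 0 < y := lt_of_lt_of_le (by positivity) hDy
  have hprod : ∏ j : Fin (k+1), ENNReal.ofReal (2 * (vecCons y (fun _ => 1) : Fin (k+1) → ℝ) j) = ENNReal.ofReal (2 * y * 2^k) := by
    rw [Fin.prod_univ_succ]
    simp
    rw [ENNReal.ofReal_mul (by positivity : 0 ≤ 2 * y), ENNReal.ofReal_mul (by norm_num), ENNReal.ofReal_pow (by norm_num)]
    simp
  rw [hprod]
  have h2 : √2 * √2 = 2 := Real.mul_self_sqrt (by norm_num)
  calc ENNReal.ofReal (D * 2^(k+1+2)) ≤ ENNReal.ofReal (2*√2) * ENNReal.ofReal (2 * y * 2^k) := by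
        rw [← ENNReal.ofReal_mul (by positivity)]
        apply ENNReal.ofReal_le_ofReal
        have : 2 * D ≤ √2 * y := by
          nlinarith [Real.sqrt_nonneg 2]
        have h3 : (0:ℝ) < 2^k := by positivity
        calc D * 2^(k+1+2) = 4 * (2 * D) * 2^k := by ring
          _ ≤ 4 * (√2 * y) * 2^k := by gcongr
          _ = _ := by ring
    _ < _ := by
        rw [ENNReal.mul_lt_mul_iff_left]
        · exact hV
        · simp; positivity
        · simp

lemma px_short {m d : ℕ} (A : Matrix (Fin m) (Fin (d + 3)) ℤ)
    (hspan : ∀ x : Fin (d + 3) → ℝ, (∀ i, pxRow A i ⬝ᵥ x = 0) → x = 0)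
    (l : Fin d → Fin m) (hl : LinearIndependent ℝ (fun a => pxRow A (l a)))
    (t : Fin (d + 3)) (y : Fin (d + 3) → ℝ) (hly : ∀ a, pxRow A (l a) ⬝ᵥ y = 0) (hy : y t ≠ 0)
    (hbig : √2 * (maxMinor A (d + 2) : ℝ) ≤ |y t|) :
    ∃ w : Fin (d + 3) → ℤ, w ≠ 0 ∧ ∃ s : ℝ, 0 ≤ s ∧ s ≤ 1 ∧
      ∀ i, |pxRow A i ⬝ᵥ (fun j => (w j : ℝ) - s * y j)| < 1 := by
  set rest : Fin (d + 1) → (Fin (d + 1 + 2) → ℤ) :=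
    vecCons (Pi.single t 1) (fun a => A (l a)) with hrest
  set G : Fin m → Fin m → ℤ := fun i j => pxG rest (A i) (A j) with hG
  obtain ⟨i1, j1, hij1⟩ := px_exists_pair A hspan l hl t y hly hy
  have : Nonempty (Fin m × Fin m) := ⟨(i1, j1)⟩
  obtain ⟨⟨i0, j0⟩, hmax⟩ := Finite.exists_max fun p : Fin m × Fin m => |G p.1 p.2|
  have hmax' : ∀ i j, |G i j| ≤ |G i0 j0| := fun i j => hmax (i, j)
  have hδ : G i0 j0 ≠ 0 := by
    have h1 := hmax' i1 j1
    have h2 : 0 < |G i1 j1| := abs_pos.2 hij1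
    exact abs_pos.1 (lt_of_lt_of_le h2 h1)
  have hself : ∀ i, G i i = 0 := by
    intro i
    apply det_zero_of_row_eq (i := 0) (j := 1) (by simp)
    ext b; simp
  have hvol := px_planar G i0 j0 hδ hmax' hself (fun i j => px_plucker rest (A i0) (A j0) (A i) (A j))
  set D : Set (ℝ × ℝ) := {x : ℝ × ℝ | ∀ i,
      |((G i j0 : ℝ) / (G i0 j0 : ℝ)) * x.1 + ((G i0 i : ℝ) / (G i0 j0 : ℝ)) * x.2| < 1} with hD
  have hδr : (G i0 j0 : ℝ) ≠ 0 := by exact_mod_cast hδ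
  set M : Matrix (Fin (d + 1 + 2)) (Fin (d + 1 + 2)) ℤ :=
    Matrix.of (vecCons (A i0) (vecCons (A j0) rest)) with hM
  set cc : Fin (d + 1 + 2) → ℝ := vecCons (-(pxRow A i0 ⬝ᵥ y) / y t)
    (vecCons (-(pxRow A j0 ⬝ᵥ y) / y t) 0) with hcc
  set R : Matrix (Fin (d + 1 + 2)) (Fin (d + 1 + 2)) ℝ :=
    Matrix.of fun a b => (M a b : ℝ) + cc a * (M 2 b : ℝ) with hR
  have hdet : R.det = (G i0 j0 : ℝ) := by
    rw [det_eq_of_forall_row_eq_smul_add_const (A := R) (B := M.map (Int.cast : ℤ → ℝ)) cc 2 rfl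
      (fun i j => rfl)]
    exact (Int.cast_det M).symm
  have hminor : |(G i0 j0 : ℝ)| ≤ (maxMinor A (d + 2) : ℝ) := by
    have := px_minor_le A l t i0 j0
    exact_mod_cast this
  have hDsymm : ∀ x ∈ D, -x ∈ D := by
    intro x hx i
    have := hx i
    rw [← abs_neg] at this
    convert this using 2
    simp only [Prod.fst_neg, Prod.snd_neg]; ring
  have hDconv : Convex ℝ D := by
    have : D = ⋂ i, (fun x : ℝ × ℝ => ((G i j0 : ℝ) / (G i0 j0 : ℝ)) * x.1 +
        ((G i0 i : ℝ) / (G i0 j0 : ℝ)) * x.2) ⁻¹' (Set.Ioo (-1) 1) := by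
      ext x
      simp only [hD, Set.mem_iInter, Set.mem_preimage, Set.mem_Ioo, ← abs_lt]
      rfl
    rw [this]
    refine convex_iInter fun i => (convex_Ioo (-1 : ℝ) 1).is_linear_preimage ⟨?_, ?_⟩
    · intro x y; simp only [Prod.fst_add, Prod.snd_add]; ring
    · intro r x; simp only [Prod.smul_fst, Prod.smul_snd, smul_eq_mul]; ring
  obtain ⟨w, hw0, hwD, hwρ⟩ := px_minkowski R (by rw [hdet]; exact hδr) D hDsymm hDconv
    (vecCons |y t| (fun _ => 1)) (by
      rw [hdet]
      refine px_cancel8 _ _ _ _ (abs_nonneg _) ?_ (abs_pos.2 hδr) hvol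
      refine le_trans ?_ hbig
      gcongr)
  set W : Fin (d + 3) → ℝ := fun j => (w j : ℝ) with hW
  set s : ℝ := W t / y t with hs
  set v : Fin (d + 3) → ℝ := W - s • y with hv
  have hMt : ∀ b, (M 2 b : ℝ) = (Pi.single t 1 : Fin (d + 3) → ℝ) b := by
    intro b
    have : M 2 b = (Pi.single t 1 : Fin (d + 3) → ℤ) b := rfl
    rw [this, Pi.single_apply, Pi.single_apply]; push_cast; rfl
  have hRW : ∀ a, (R *ᵥ W) a = (fun b => (M a b : ℝ)) ⬝ᵥ W + cc a * W t := by
    intro a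
    have h1 : R a = (fun b => (M a b : ℝ)) + cc a • (Pi.single t 1 : Fin (d + 3) → ℝ) := by
      ext b
      simp only [hR, of_apply, Pi.add_apply, Pi.smul_apply, smul_eq_mul, hMt]
    change R a ⬝ᵥ W = _
    rw [h1, add_dotProduct, smul_dotProduct, single_dotProduct, one_mul, smul_eq_mul]
  have hslt : |s| < 1 := by
    have h := hwρ 0
    change |(R *ᵥ W) 2| < |y t| at h
    rw [hRW] at h
    have h1 : (fun b => (M 2 b : ℝ)) = (Pi.single t 1 : Fin (d + 3) → ℝ) := funext hMt
    have h2 : cc 2 = 0 := rfl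
    rw [h1, h2, single_dotProduct, one_mul, zero_mul, add_zero] at h
    rw [hs, abs_div, div_lt_one (abs_pos.2 hy)]; exact h
  have hvt : v t = 0 := by
    simp only [hv, hs, Pi.sub_apply, Pi.smul_apply, smul_eq_mul]; field_simp; ring
  have hvl : ∀ a, pxRow A (l a) ⬝ᵥ v = 0 := by
    intro a
    have h := hwρ a.succ
    change |(R *ᵥ W) a.succ.succ.succ| < 1 at h
    rw [hRW] at h
    have h2 : cc a.succ.succ.succ = 0 := by simp [hcc]
    have h1 : (fun b => (M a.succ.succ.succ b : ℝ)) = pxRow A (l a) := rfl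
    rw [h1, h2, zero_mul, add_zero] at h
    have h3 : pxRow A (l a) ⬝ᵥ W = ((∑ j, A (l a) j * w j : ℤ) : ℝ) := by
      simp only [dotProduct, pxRow, hW]; push_cast; rfl
    rw [h3] at h
    have h4 : (∑ j, A (l a) j * w j : ℤ) = 0 := by
      rw [← Int.abs_lt_one_iff]; exact_mod_cast h
    rw [hv, dotProduct_sub, dotProduct_smul, hly, h3, h4]; simp
  have hv0 : pxRow A i0 ⬝ᵥ v = (R *ᵥ W) 0 := by
    rw [hRW]
    have h1 : (fun b => (M 0 b : ℝ)) = pxRow A i0 := rfl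
    have h2 : cc 0 = -(pxRow A i0 ⬝ᵥ y) / y t := rfl
    rw [h1, h2, hv, dotProduct_sub, dotProduct_smul, smul_eq_mul, hs]; ring
  have hv1 : pxRow A j0 ⬝ᵥ v = (R *ᵥ W) 1 := by
    rw [hRW]
    have h1 : (fun b => (M 1 b : ℝ)) = pxRow A j0 := rfl
    have h2 : cc 1 = -(pxRow A j0 ⬝ᵥ y) / y t := rfl
    rw [h1, h2, hv, dotProduct_sub, dotProduct_smul, smul_eq_mul, hs]; ring
  have hall : ∀ i, |pxRow A i ⬝ᵥ v| < 1 := by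
    intro i
    have h := hwD i
    obtain ⟨c, hc⟩ := px_cramer rest (A i0) (A j0) (A i)
    have hrv : ∀ a, (fun b => (rest a b : ℝ)) ⬝ᵥ v = 0 := by
      intro a
      refine Fin.cases ?_ (fun a => ?_) a
      · have : (fun b => (rest 0 b : ℝ)) = (Pi.single t 1 : Fin (d + 3) → ℝ) := funext hMt
        rw [this, single_dotProduct, one_mul, hvt]
      · exact hvl a
    have hc' : (G i0 j0 : ℝ) • pxRow A i = (G i j0 : ℝ) • pxRow A i0 + (G i0 i : ℝ) • pxRow A j0 +
        ∑ a, (c a : ℝ) • (fun b => (rest a b : ℝ)) := by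
      ext b
      have := congrFun hc b
      simp only [Pi.add_apply, Pi.smul_apply, smul_eq_mul, Finset.sum_apply, pxRow, hG] at this ⊢
      exact_mod_cast this
    have h5 := congrArg (fun u => u ⬝ᵥ v) hc'
    simp only [add_dotProduct, smul_dotProduct, sum_dotProduct, hrv, smul_eq_mul, mul_zero,
      Finset.sum_const_zero, add_zero] at h5
    have h6 : pxRow A i ⬝ᵥ v = ((G i j0 : ℝ) / (G i0 j0 : ℝ)) * (R *ᵥ W) 0 +
        ((G i0 i : ℝ) / (G i0 j0 : ℝ)) * (R *ᵥ W) 1 := by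
      rw [← hv0, ← hv1]
      field_simp
      linarith
    rw [h6]; exact h
  have hsl := abs_lt.1 hslt
  rcases le_total 0 s with h | h
  · exact ⟨w, hw0, s, h, hsl.2.le, hall⟩
  · refine ⟨-w, neg_ne_zero.2 hw0, -s, by linarith, by linarith, fun i => ?_⟩
    have := hall i
    rw [← abs_neg, ← dotProduct_neg] at this
    have hneg : (fun j => (((-w) j : ℤ) : ℝ) - -s * y j) = -v := by
      ext j
      simp [hv, hW]; ring
    rw [hneg]; exact this

/-- rank of the tight rows. -/
noncomputable def pxrk {m n : ℕ} (g : Fin m → (Fin n → ℝ)) (S : Set (Fin m)) : ℕ :=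
  Module.finrank ℝ (Submodule.span ℝ (g '' S))

lemma pxrk_mono {m n : ℕ} (g : Fin m → (Fin n → ℝ)) {S T : Set (Fin m)} (h : S ⊆ T) :
    pxrk g S ≤ pxrk g T :=
  Submodule.finrank_mono (Submodule.span_mono (Set.image_mono h))

lemma px_ray {ι : Type*} [Finite ι] (S : Set ι) (a c : ι → ℝ) (ha : ∀ i ∈ S, 0 < a i)
    (hc : ∃ i ∈ S, c i < 0) :
    ∃ t : ℝ, 0 < t ∧ (∀ i ∈ S, 0 ≤ a i + t * c i) ∧ ∃ i ∈ S, a i + t * c i = 0 := by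
  obtain ⟨i0, ⟨hi0, hc0⟩, hmin⟩ := Set.exists_min_image {i | i ∈ S ∧ c i < 0}
    (fun i => a i / (- c i)) (Set.toFinite _) (by obtain ⟨i, h⟩ := hc; exact ⟨i, h⟩)
  have ht : 0 < a i0 / (- c i0) := div_pos (ha _ hi0) (by linarith)
  refine ⟨a i0 / (- c i0), ht, fun i hi => ?_, i0, hi0, ?_⟩
  · rcases lt_or_ge (c i) 0 with h | h
    · have h1 := hmin i ⟨hi, h⟩
      have h2 : a i / (- c i) * c i = - a i := by
        have := h.ne
        field_simp
      nlinarith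
    · have := ha i hi
      positivity
  · have := hc0.ne
    field_simp; ring

lemma px_small {ι : Type*} [Finite ι] (S : Set ι) (a c : ι → ℝ) (ha : ∀ i ∈ S, 0 < a i) :
    ∃ t : ℝ, 0 < t ∧ (∀ i ∈ S, 0 ≤ a i + t * c i) := by
  by_cases hc : ∃ i ∈ S, c i < 0
  · obtain ⟨t, h1, h2, _⟩ := px_ray S a c ha hc
    exact ⟨t, h1, h2⟩
  · push Not at hc
    exact ⟨1, one_pos, fun i hi => by have := ha i hi; have := hc i hi; linarith⟩

lemma px_compact {m n : ℕ} (g : Fin m → (Fin n → ℝ))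
    (hspan : ∀ x : Fin n → ℝ, (∀ i, g i ⬝ᵥ x = 0) → x = 0) (y : Fin n → ℝ) :
    IsCompact {v : Fin n → ℝ | (∀ i, 0 ≤ g i ⬝ᵥ v) ∧ (∀ i, g i ⬝ᵥ v ≤ g i ⬝ᵥ y) ∧
      n ≤ pxrk g {i | g i ⬝ᵥ v = 0} + 3} := by
  have hcont : ∀ i, Continuous fun v : Fin n → ℝ => g i ⬝ᵥ v := fun i => by
    simp only [dotProduct]; fun_prop
  have h1 : IsCompact {v : Fin n → ℝ | (∀ i, 0 ≤ g i ⬝ᵥ v) ∧ (∀ i, g i ⬝ᵥ v ≤ g i ⬝ᵥ y)} := by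
    have hinj : Function.Injective (Matrix.of g).mulVecLin := by
      rw [injective_iff_map_eq_zero]
      intro x hx
      exact hspan x fun i => congrFun hx i
    have hce := LinearMap.isClosedEmbedding_of_injective (LinearMap.ker_eq_bot.2 hinj)
    have := hce.isCompact_preimage (K := Set.Icc 0 (fun i => g i ⬝ᵥ y)) isCompact_Icc
    exact this
  have h2 : IsClosed {v : Fin n → ℝ | n ≤ pxrk g {i | g i ⬝ᵥ v = 0} + 3} := by
    have : {v : Fin n → ℝ | n ≤ pxrk g {i | g i ⬝ᵥ v = 0} + 3} =
        ⋃ S ∈ {S : Set (Fin m) | n ≤ pxrk g S + 3}, ⋂ i ∈ S, {v : Fin n → ℝ | g i ⬝ᵥ v = 0} := by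
      ext v
      simp only [Set.mem_iUnion, Set.mem_iInter, Set.mem_ofPred_eq, exists_prop]
      constructor
      · intro h; exact ⟨_, h, fun i hi => hi⟩
      · rintro ⟨S, h, hS⟩
        exact h.trans (Nat.add_le_add_right (pxrk_mono g fun i hi => hS i hi) 3)
    rw [this]
    refine Set.Finite.isClosed_biUnion (Set.toFinite _) fun S _ => ?_
    exact isClosed_biInter fun i _ => isClosed_eq (hcont i) continuous_const
  convert h1.inter_right h2 using 1
  ext v
  simp only [Set.mem_inter_iff, Set.mem_ofPred_eq, and_assoc]

lemma px_decomp {m n : ℕ} (g : Fin m → (Fin n → ℝ))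
    (hspan : ∀ x : Fin n → ℝ, (∀ i, g i ⬝ᵥ x = 0) → x = 0) (y : Fin n → ℝ)
    (hy : ∀ i, 0 ≤ g i ⬝ᵥ y) :
    ∃ v : Fin n → ℝ, (∀ i, 0 ≤ g i ⬝ᵥ v) ∧ (∀ i, g i ⬝ᵥ v ≤ g i ⬝ᵥ y) ∧
      n ≤ pxrk g {i | g i ⬝ᵥ v = 0} + 3 ∧
      min n (pxrk g {i | g i ⬝ᵥ y = 0} + 3) ≤ pxrk g {i | g i ⬝ᵥ (y - v) = 0} := by
  have hspan' : Submodule.span ℝ (Set.range g) = ⊤ := by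
    by_contra hcon
    obtain ⟨e, he0, he⟩ := px_exists_kernel _ hcon
    exact he0 (hspan e fun i => he _ (Submodule.subset_span ⟨i, rfl⟩))
  have hfull : pxrk g Set.univ = n := by
    rw [pxrk, Set.image_univ, hspan']; simp
  set K := {v : Fin n → ℝ | (∀ i, 0 ≤ g i ⬝ᵥ v) ∧ (∀ i, g i ⬝ᵥ v ≤ g i ⬝ᵥ y) ∧
      n ≤ pxrk g {i | g i ⬝ᵥ v = 0} + 3} with hK
  have hKc : IsCompact K := px_compact g hspan y
  have hK0 : (0 : Fin n → ℝ) ∈ K := by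
    refine ⟨fun i => by simp, fun i => by simpa using hy i, ?_⟩
    have : {i | g i ⬝ᵥ (0 : Fin n → ℝ) = 0} = Set.univ := by ext i; simp
    rw [this, hfull]; omega
  set f : Fin n → ℝ := ∑ i, g i with hf
  obtain ⟨v0, hv0K, hv0⟩ := hKc.exists_isMaxOn ⟨0, hK0⟩ (f := fun v => f ⬝ᵥ v)
    (by simp only [dotProduct]; fun_prop)
  set T : (Fin n → ℝ) → Set (Fin m) × Set (Fin m) :=
    fun v => ({i | g i ⬝ᵥ v = 0}, {i | g i ⬝ᵥ (y - v) = 0}) with hT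
  obtain ⟨v, ⟨hvK, hvf⟩, hvmax⟩ := Set.Finite.exists_maximalFor' T {v | v ∈ K ∧ f ⬝ᵥ v = f ⬝ᵥ v0}
    (Set.toFinite _) ⟨v0, hv0K, rfl⟩
  have hfmax : ∀ w ∈ K, f ⬝ᵥ w ≤ f ⬝ᵥ v := by
    intro w hw; rw [hvf]; exact hv0 hw
  obtain ⟨hv1, hv2, hv3⟩ := hvK
  refine ⟨v, hv1, hv2, hv3, ?_⟩
  by_contra hcon
  push Not at hcon
  set Lo : Set (Fin m) := {i | g i ⬝ᵥ v = 0} with hLo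
  set Up : Set (Fin m) := {i | g i ⬝ᵥ (y - v) = 0} with hUp
  set Z : Set (Fin m) := {i | g i ⬝ᵥ y = 0} with hZ
  have hsub : ∀ i, g i ⬝ᵥ (y - v) = g i ⬝ᵥ y - g i ⬝ᵥ v := fun i => dotProduct_sub _ _ _
  have hyv : ∀ i, 0 ≤ g i ⬝ᵥ (y - v) := fun i => by rw [hsub]; linarith [hv2 i]
  -- admissible directions
  set Q : Set (Fin n → ℝ) := {d | (∀ u ∈ Up, g u ⬝ᵥ d = 0) ∧ (∀ l ∈ Lo, 0 ≤ g l ⬝ᵥ d) ∧ 0 < f ⬝ᵥ d}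
    with hQ
  have hQne : y - v ∈ Q := by
    refine ⟨fun u hu => hu, fun l _ => hyv l, ?_⟩
    have h0 : f ⬝ᵥ (y - v) = ∑ i, g i ⬝ᵥ (y - v) := by rw [hf, sum_dotProduct]
    rw [h0]
    refine lt_of_le_of_ne (Finset.sum_nonneg fun i _ => hyv i) fun h => ?_
    have h1 := (Finset.sum_eq_zero_iff_of_nonneg (fun i _ => hyv i)).1 h.symm
    have : Up = Set.univ := by
      ext i; simp only [Set.mem_univ, iff_true]; exact h1 i (Finset.mem_univ _)
    rw [this, hfull] at hcon
    exact absurd hcon (by simp)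
  obtain ⟨d, ⟨hd1, hd2, hd3⟩, hdmax⟩ := Set.Finite.exists_maximalFor'
    (fun d : Fin n → ℝ => {l | l ∈ Lo ∧ g l ⬝ᵥ d = 0}) Q (Set.toFinite _) ⟨_, hQne⟩
  set L0 : Set (Fin m) := {l | l ∈ Lo ∧ g l ⬝ᵥ d = 0} with hL0
  by_cases hcase : n ≤ pxrk g L0 + 3
  · -- a small step in direction d
    obtain ⟨t, ht, hts⟩ := px_small {s : Fin m ⊕ Fin m | Sum.elim (fun i => i ∉ Lo) (fun i => i ∉ Up) s}
      (Sum.elim (fun i => g i ⬝ᵥ v) (fun i => g i ⬝ᵥ (y - v)))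
      (Sum.elim (fun i => g i ⬝ᵥ d) (fun i => - (g i ⬝ᵥ d))) (by
        rintro (i | i) hi
        · exact lt_of_le_of_ne (hv1 i) (Ne.symm hi)
        · exact lt_of_le_of_ne (hyv i) (Ne.symm hi))
    have hstep : ∀ i, g i ⬝ᵥ (v + t • d) = g i ⬝ᵥ v + t * (g i ⬝ᵥ d) := fun i => by
      rw [dotProduct_add, dotProduct_smul, smul_eq_mul]
    have hmem : v + t • d ∈ K := by
      refine ⟨fun i => ?_, fun i => ?_, ?_⟩
      · rw [hstep]
        by_cases hi : i ∈ Lo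
        · have := hd2 i hi
          have := hv1 i
          positivity
        · exact hts (Sum.inl i) hi
      · rw [hstep]
        by_cases hi : i ∈ Up
        · rw [hd1 i hi]; linarith [hv2 i]
        · have := hts (Sum.inr i) hi
          simp only [Sum.elim_inr, hsub] at this
          linarith
      · refine hcase.trans (Nat.add_le_add_right (pxrk_mono g fun i hi => ?_) 3)
        have h1 : g i ⬝ᵥ v = 0 := hi.1
        have h2 : g i ⬝ᵥ d = 0 := hi.2
        change g i ⬝ᵥ (v + t • d) = 0
        rw [hstep, h1, h2]; ring
    have h1 := hfmax _ hmem
    rw [dotProduct_add, dotProduct_smul, smul_eq_mul] at h1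
    have := mul_pos ht hd3
    linarith
  · -- there is a kernel vector
    push Not at hcase
    have hZ1 : Z ⊆ Up := by
      intro i hi
      have h1 : g i ⬝ᵥ y = 0 := hi
      have h2 := hyv i
      change g i ⬝ᵥ (y - v) = 0
      rw [hsub] at h2 ⊢
      linarith [hv1 i]
    have hZ2 : Z ⊆ L0 := by
      intro i hi
      have h1 : g i ⬝ᵥ y = 0 := hi
      have h2 := hv1 i
      refine ⟨?_, hd1 i (hZ1 hi)⟩
      change g i ⬝ᵥ v = 0
      linarith [hv2 i]
    set W := (Submodule.span ℝ (g '' L0) ⊔ Submodule.span ℝ (g '' Up)) ⊔ Submodule.span ℝ {f} with hW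
    have hWne : W ≠ ⊤ := by
      intro hWt
      have h1 := Submodule.finrank_sup_add_finrank_inf_eq (Submodule.span ℝ (g '' L0))
        (Submodule.span ℝ (g '' Up))
      have h2 : pxrk g Z ≤ Module.finrank ℝ
          ↥(Submodule.span ℝ (g '' L0) ⊓ Submodule.span ℝ (g '' Up)) :=
        Submodule.finrank_mono (le_inf (Submodule.span_mono (Set.image_mono hZ2))
          (Submodule.span_mono (Set.image_mono hZ1)))
      have h3 := Submodule.finrank_add_le_finrank_add_finrank
        (Submodule.span ℝ (g '' L0) ⊔ Submodule.span ℝ (g '' Up)) (Submodule.span ℝ {f})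
      have h4 : Module.finrank ℝ (Submodule.span ℝ {f}) ≤ 1 := by
        simpa using finrank_span_le_card (R := ℝ) ({f} : Set (Fin n → ℝ))
      have h5 : Module.finrank ℝ W = n := by rw [hWt]; simp
      have h6 : Module.finrank ℝ (Submodule.span ℝ (g '' L0)) = pxrk g L0 := rfl
      have h7 : Module.finrank ℝ (Submodule.span ℝ (g '' Up)) = pxrk g Up := rfl
      rw [← hW, h5] at h3
      have h8 := lt_min_iff.1 hcon
      omega
    obtain ⟨e0, he00, he0⟩ := px_exists_kernel W hWne
    have hWL : ∀ i ∈ L0, g i ∈ W := fun i hi =>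
      Submodule.mem_sup_left (Submodule.mem_sup_left (Submodule.subset_span ⟨i, hi, rfl⟩))
    have hWU : ∀ i ∈ Up, g i ∈ W := fun i hi =>
      Submodule.mem_sup_left (Submodule.mem_sup_right (Submodule.subset_span ⟨i, hi, rfl⟩))
    have hWf : f ∈ W := Submodule.mem_sup_right (Submodule.subset_span rfl)
    have hsign : ∀ i, g i ⬝ᵥ e0 ≠ 0 → ∃ e : Fin n → ℝ, (∀ w ∈ W, w ⬝ᵥ e = 0) ∧ g i ⬝ᵥ e < 0 ∧
        ∀ j, g j ⬝ᵥ e0 = 0 → g j ⬝ᵥ e = 0 := by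
      intro i hi
      rcases lt_or_gt_of_ne hi with h | h
      · exact ⟨e0, he0, h, fun j hj => hj⟩
      · exact ⟨-e0, fun w hw => by rw [dotProduct_neg, he0 w hw, neg_zero],
          by rw [dotProduct_neg]; linarith, fun j hj => by rw [dotProduct_neg, hj, neg_zero]⟩
    by_cases hL : ∃ l ∈ Lo, g l ⬝ᵥ e0 ≠ 0
    · obtain ⟨l, hl, hle⟩ := hL
      obtain ⟨e, heW, hel, -⟩ := hsign l hle
      obtain ⟨t, ht, hts, i, hi, hit⟩ := px_ray {i | i ∈ Lo ∧ i ∉ L0} (fun i => g i ⬝ᵥ d)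
        (fun i => g i ⬝ᵥ e) (fun i hi => lt_of_le_of_ne (hd2 i hi.1) fun h => hi.2 ⟨hi.1, h.symm⟩)
        ⟨l, ⟨hl, fun h => hel.ne (heW _ (hWL l h))⟩, hel⟩
      have hstep : ∀ i, g i ⬝ᵥ (d + t • e) = g i ⬝ᵥ d + t * (g i ⬝ᵥ e) := fun i => by
        rw [dotProduct_add, dotProduct_smul, smul_eq_mul]
      have hmem : d + t • e ∈ Q := by
        refine ⟨fun u hu => ?_, fun l hl => ?_, ?_⟩
        · rw [hstep, hd1 u hu, heW _ (hWU u hu)]; ring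
        · rw [hstep]
          by_cases h : l ∈ L0
          · rw [h.2, heW _ (hWL l h)]; simp
          · exact hts l ⟨hl, h⟩
        · rw [dotProduct_add, dotProduct_smul, heW _ hWf]; simpa using hd3
      have hle : L0 ≤ {l | l ∈ Lo ∧ g l ⬝ᵥ (d + t • e) = 0} := by
        intro l hl
        refine ⟨hl.1, ?_⟩
        rw [hstep, hl.2, heW _ (hWL l hl)]; ring
      exact hi.2 (hdmax hmem hle ⟨hi.1, by rw [hstep]; exact hit⟩)
    · push Not at hL
      have : ∃ i, g i ⬝ᵥ e0 ≠ 0 := by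
        by_contra h
        push Not at h
        exact he00 (hspan e0 h)
      obtain ⟨i, hi⟩ := this
      obtain ⟨e, heW, hei, hez⟩ := hsign i hi
      obtain ⟨t, ht, hts, s, hs, hst⟩ := px_ray
        {s : Fin m ⊕ Fin m | Sum.elim (fun i => i ∉ Lo) (fun i => i ∉ Up) s}
        (Sum.elim (fun i => g i ⬝ᵥ v) (fun i => g i ⬝ᵥ (y - v)))
        (Sum.elim (fun i => g i ⬝ᵥ e) (fun i => - (g i ⬝ᵥ e))) (by
          rintro (i | i) hi
          · exact lt_of_le_of_ne (hv1 i) (Ne.symm hi)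
          · exact lt_of_le_of_ne (hyv i) (Ne.symm hi))
        ⟨Sum.inl i, fun h => hi (hL i h), hei⟩
      have hstep : ∀ i, g i ⬝ᵥ (v + t • e) = g i ⬝ᵥ v + t * (g i ⬝ᵥ e) := fun i => by
        rw [dotProduct_add, dotProduct_smul, smul_eq_mul]
      have hstep2 : ∀ i, g i ⬝ᵥ (y - (v + t • e)) = g i ⬝ᵥ (y - v) + t * -(g i ⬝ᵥ e) := fun i => by
        rw [dotProduct_sub, hstep, hsub]; ring
      have hT1 : Lo ⊆ {i | g i ⬝ᵥ (v + t • e) = 0} := by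
        intro i hi
        have h1 : g i ⬝ᵥ v = 0 := hi
        change g i ⬝ᵥ (v + t • e) = 0
        rw [hstep, h1, hez i (hL i hi)]; ring
      have hT2 : Up ⊆ {i | g i ⬝ᵥ (y - (v + t • e)) = 0} := by
        intro i hi
        have h1 : g i ⬝ᵥ (y - v) = 0 := hi
        change g i ⬝ᵥ (y - (v + t • e)) = 0
        rw [hstep2, h1, heW _ (hWU i hi)]; ring
      have hmem : v + t • e ∈ K := by
        refine ⟨fun i => ?_, fun i => ?_, ?_⟩
        · by_cases hi : i ∈ Lo
          · exact (hT1 hi).ge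
          · rw [hstep]; exact hts (Sum.inl i) hi
        · rw [← sub_nonneg, ← dotProduct_sub]
          by_cases hi : i ∈ Up
          · exact (hT2 hi).ge
          · rw [hstep2]; exact hts (Sum.inr i) hi
        · exact hv3.trans (Nat.add_le_add_right (pxrk_mono g hT1) 3)
      have hmem2 : v + t • e ∈ {v | v ∈ K ∧ f ⬝ᵥ v = f ⬝ᵥ v0} := by
        refine ⟨hmem, ?_⟩
        rw [dotProduct_add, dotProduct_smul, heW _ hWf, hvf]; simp
      have hfin := hvmax hmem2 (show T v ≤ T (v + t • e) from ⟨hT1, hT2⟩)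
      rcases s with i | i
      · exact hs (hfin.1 (show g i ⬝ᵥ (v + t • e) = 0 by rw [hstep]; exact hst))
      · exact hs (hfin.2 (show g i ⬝ᵥ (y - (v + t • e)) = 0 by rw [hstep2]; exact hst))

lemma px_induct {m n : ℕ} (g : Fin m → (Fin n → ℝ))
    (hspan : ∀ x : Fin n → ℝ, (∀ i, g i ⬝ᵥ x = 0) → x = 0) (y : Fin n → ℝ) (t : Fin n) (c : ℝ)
    (hc : ∀ v : Fin n → ℝ, (∀ i, 0 ≤ g i ⬝ᵥ v) → (∀ i, g i ⬝ᵥ v ≤ g i ⬝ᵥ y) →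
      n ≤ pxrk g {i | g i ⬝ᵥ v = 0} + 3 → |v t| < c) :
    ∀ k : ℕ, ∀ x : Fin n → ℝ, (∀ i, 0 ≤ g i ⬝ᵥ x) → (∀ i, g i ⬝ᵥ x ≤ g i ⬝ᵥ y) →
      n ≤ pxrk g {i | g i ⬝ᵥ x = 0} + 3 * (k + 1) → |x t| < ((k : ℝ) + 1) * c := by
  intro k
  induction k with
  | zero =>
    intro x h1 h2 h3
    have := hc x h1 h2 (by omega)
    simpa using this
  | succ k ih =>
    intro x h1 h2 h3
    obtain ⟨v, hv1, hv2, hv3, hv4⟩ := px_decomp g hspan x h1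
    have ha := hc v hv1 (fun i => (hv2 i).trans (h2 i)) hv3
    have hb := ih (x - v) (fun i => by rw [dotProduct_sub]; linarith [hv2 i])
      (fun i => by rw [dotProduct_sub]; linarith [hv1 i, h2 i]) (by
        rcases min_le_iff.1 hv4 with h | h <;> omega)
    have : x t = v t + (x - v) t := by simp
    rw [this]
    refine (abs_add_le _ _).trans_lt ?_
    push_cast
    linarith

lemma px_select {m n d : ℕ} (g : Fin m → (Fin n → ℝ)) (S : Set (Fin m)) (h : d ≤ pxrk g S) :
    ∃ l : Fin d → Fin m, (∀ a, l a ∈ S) ∧ LinearIndependent ℝ (fun a => g (l a)) := by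
  obtain ⟨f, hf1, hf2, hf3⟩ := Submodule.exists_fun_fin_finrank_span_eq ℝ (g '' S)
  choose l hl using hf1
  refine ⟨fun a => l (Fin.castLE h a), fun a => (hl _).1, ?_⟩
  have : (fun a => g (l (Fin.castLE h a))) = f ∘ Fin.castLE h := by
    funext a; exact (hl _).2
  rw [this]
  exact hf3.comp _ (Fin.castLE_injective h)

lemma px_minor_pos {m d : ℕ} (A : Matrix (Fin m) (Fin (d + 3)) ℤ)
    (hspan : ∀ x : Fin (d + 3) → ℝ, (∀ i, pxRow A i ⬝ᵥ x = 0) → x = 0) :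
    0 < maxMinor A (d + 2) := by
  have hspan' : Submodule.span ℝ (Set.range (pxRow A)) = ⊤ := by
    by_contra hcon
    obtain ⟨e, he0, he⟩ := px_exists_kernel _ hcon
    exact he0 (hspan e fun i => he _ (Submodule.subset_span ⟨i, rfl⟩))
  obtain ⟨l, -, hl⟩ := px_select (d := d) (pxRow A) Set.univ (by
    rw [pxrk, Set.image_univ, hspan']; simp)
  have hW : Submodule.span ℝ (Set.range fun a => pxRow A (l a)) ≠ ⊤ := by
    intro h
    have := finrank_span_eq_card hl
    rw [h] at this
    simp at this
  obtain ⟨y, hy0, hy⟩ := px_exists_kernel _ hW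
  obtain ⟨t, ht⟩ := Function.ne_iff.1 hy0
  obtain ⟨i, j, hij⟩ := px_exists_pair A hspan l hl t y
    (fun a => hy _ (Submodule.subset_span ⟨a, rfl⟩)) ht
  have h1 := px_minor_le A l t i j
  have h2 := lt_of_lt_of_le (abs_pos.2 hij) h1
  exact_mod_cast h2

lemma px_core {m d k : ℕ} (hdk : d + 3 = 3 * (k + 1)) (A : Matrix (Fin m) (Fin (d + 3)) ℤ)
    (hspan : ∀ x : Fin (d + 3) → ℝ, (∀ i, pxRow A i ⬝ᵥ x = 0) → x = 0)
    (y : Fin (d + 3) → ℝ)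
    (hno : ∀ w : Fin (d + 3) → ℤ, w ≠ 0 →
      ¬ (∀ i, (0 ≤ pxRow A i ⬝ᵥ y → pxRow A i ⬝ᵥ (fun j => (w j : ℝ)) < pxRow A i ⬝ᵥ y + 1 ∧
          -1 < pxRow A i ⬝ᵥ (fun j => (w j : ℝ))) ∧
        (pxRow A i ⬝ᵥ y < 0 → pxRow A i ⬝ᵥ (fun j => (w j : ℝ)) < 1)))
    (t : Fin (d + 3)) :
    |y t| < ((k : ℝ) + 1) * (√2 * (maxMinor A (d + 2) : ℝ)) := by
  classical
  set σ : Fin m → ℝˣ := fun i => if 0 ≤ pxRow A i ⬝ᵥ y then 1 else -1 with hσ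
  have hσσ : ∀ i, ((σ i : ℝ)) * (σ i : ℝ) = 1 := by
    intro i; simp only [hσ]; split_ifs <;> simp
  set g : Fin m → (Fin (d + 3) → ℝ) := fun i => (σ i : ℝ) • pxRow A i with hg
  have hgd : ∀ i x, g i ⬝ᵥ x = (σ i : ℝ) * (pxRow A i ⬝ᵥ x) := fun i x => by
    simp only [hg, smul_dotProduct, smul_eq_mul]
  have hgs : ∀ x, (∀ i, g i ⬝ᵥ x = 0) → x = 0 := by
    intro x hx
    refine hspan x fun i => ?_
    have := hx i
    rw [hgd] at this
    exact (mul_eq_zero.1 this).resolve_left (σ i).ne_zero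
  have hgy : ∀ i, 0 ≤ g i ⬝ᵥ y := by
    intro i
    rw [hgd]
    simp only [hσ]
    split_ifs with h
    · simpa using h
    · simp; linarith
  refine px_induct g hgs y t _ (fun v hv1 hv2 hv3 => ?_) k y hgy (fun i => le_rfl) (by omega)
  by_contra hcon
  push Not at hcon
  have hpos : 0 < √2 * (maxMinor A (d + 2) : ℝ) :=
    mul_pos (by positivity) (by exact_mod_cast px_minor_pos A hspan)
  have hvt : v t ≠ 0 := abs_pos.1 (lt_of_lt_of_le hpos hcon)
  obtain ⟨l, hlS, hl⟩ := px_select (d := d) g _ (by omega : d ≤ pxrk g {i | g i ⬝ᵥ v = 0})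
  have hl' : LinearIndependent ℝ (fun a => pxRow A (l a)) := by
    have := hl.units_smul (fun a => σ (l a))
    convert this using 1
    funext a
    simp only [hg, Pi.smul_apply', Units.smul_def, smul_smul, hσσ, one_smul]
  obtain ⟨w, hw0, s, hs0, hs1, hw⟩ := px_short A hspan l hl' t v (fun a => by
    have : g (l a) ⬝ᵥ v = 0 := hlS a
    rw [hgd] at this
    exact (mul_eq_zero.1 this).resolve_left (σ (l a)).ne_zero) hvt hcon
  refine hno w hw0 fun i => ?_
  have h1 := hw i
  have h2 : pxRow A i ⬝ᵥ (fun j => (w j : ℝ) - s * v j) =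
      pxRow A i ⬝ᵥ (fun j => (w j : ℝ)) - s * (pxRow A i ⬝ᵥ v) := by
    rw [← smul_eq_mul, ← dotProduct_smul, ← dotProduct_sub]; rfl
  rw [h2] at h1
  obtain ⟨h3, h4⟩ := abs_lt.1 h1
  have h5 := hv1 i
  have h6 := hv2 i
  rw [hgd] at h5
  rw [hgd, hgd] at h6
  constructor
  · intro h
    have : σ i = 1 := by simp [hσ, h]
    rw [this] at h5 h6
    simp only [Units.val_one, one_mul] at h5 h6
    constructor <;> nlinarith
  · intro h
    have : σ i = -1 := by simp [hσ, h]
    rw [this] at h5 h6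
    simp only [Units.val_neg, Units.val_one, neg_mul, one_mul] at h5 h6
    nlinarith

end PxHelpers

/-- Proximity bound `(√2/3) · n · Δ_{n−1}(A)` when `n` is a multiple of 3. -/
theorem stmt16 {m n : ℕ} (hn : 0 < n) (h3 : 3 ∣ n) (A : Matrix (Fin m) (Fin n) ℤ)
    (hrank : (A.map (Int.cast : ℤ → ℚ)).rank = n)
    (b : Fin m → ℤ) (c : Fin n → ℚ)
    (P : Set (Fin n → ℝ))
    (hP : P = {x | ∀ i, (A.map (Int.cast : ℤ → ℝ)).mulVec x i ≤ (b i : ℝ)})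
    (xs : Fin n → ℝ) (hxsP : xs ∈ P)
    (hvert : xs ∈ Set.extremePoints ℝ P)
    (hopt : ∀ x ∈ P, ∑ i, (c i : ℝ) * x i ≤ ∑ i, (c i : ℝ) * xs i)
    (hfeas : ∃ z : Fin n → ℤ, (fun i => (z i : ℝ)) ∈ P) :
    ∃ z : Fin n → ℤ, (fun i => (z i : ℝ)) ∈ P ∧
      (∀ w : Fin n → ℤ, (fun i => (w i : ℝ)) ∈ P →
        ∑ i, (c i : ℝ) * (w i : ℝ) ≤ ∑ i, (c i : ℝ) * (z i : ℝ)) ∧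
      ‖(fun i => xs i - (z i : ℝ))‖ < (Real.sqrt 2 / 3 * (n : ℝ)) * (maxMinor A (n - 1) : ℝ) := by
  classical
  obtain ⟨q, hq⟩ := h3
  obtain ⟨k, rfl⟩ : ∃ k, q = k + 1 := ⟨q - 1, by omega⟩
  obtain ⟨d, rfl⟩ : ∃ d, n = d + 3 := ⟨n - 3, by omega⟩
  have hmem : ∀ x, x ∈ P ↔ ∀ i, pxRow A i ⬝ᵥ x ≤ (b i : ℝ) := fun x => by rw [hP]; rfl
  have hxs := (hmem xs).1 hxsP
  set J : Set (Fin m) := {i | pxRow A i ⬝ᵥ xs = (b i : ℝ)} with hJ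
  -- small feasible steps
  have hstep : ∀ w : Fin (d + 3) → ℝ, (∀ j ∈ J, 0 ≤ pxRow A j ⬝ᵥ w) →
      ∃ t : ℝ, 0 < t ∧ xs - t • w ∈ P := by
    intro w hw
    obtain ⟨t, ht, hts⟩ := px_small Jᶜ (fun i => (b i : ℝ) - pxRow A i ⬝ᵥ xs)
      (fun i => pxRow A i ⬝ᵥ w) (fun i hi => sub_pos.2 (lt_of_le_of_ne (hxs i) hi))
    refine ⟨t, ht, (hmem _).2 fun i => ?_⟩
    rw [dotProduct_sub, dotProduct_smul, smul_eq_mul]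
    by_cases hi : i ∈ J
    · have := mul_nonneg ht.le (hw i hi)
      linarith [hxs i]
    · have := hts i hi
      linarith
  have hcw : ∀ w : Fin (d + 3) → ℝ, (∀ j ∈ J, 0 ≤ pxRow A j ⬝ᵥ w) → 0 ≤ ∑ i, (c i : ℝ) * w i := by
    intro w hw
    obtain ⟨t, ht, hP'⟩ := hstep w hw
    have h1 := hopt _ hP'
    have h2 : ∑ i, (c i : ℝ) * (xs - t • w) i =
        ∑ i, (c i : ℝ) * xs i - t * ∑ i, (c i : ℝ) * w i := by
      rw [Finset.mul_sum, ← Finset.sum_sub_distrib]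
      refine Finset.sum_congr rfl fun i _ => ?_
      simp only [Pi.sub_apply, Pi.smul_apply, smul_eq_mul]; ring
    rw [h2] at h1
    by_contra hcon
    push Not at hcon
    nlinarith
  have hJspan : ∀ x : Fin (d + 3) → ℝ, (∀ j ∈ J, pxRow A j ⬝ᵥ x = 0) → x = 0 := by
    intro x hx
    obtain ⟨t1, ht1, h1⟩ := hstep x fun j hj => (hx j hj).ge
    obtain ⟨t2, ht2, h2⟩ := hstep (-x) fun j hj => by rw [dotProduct_neg, hx j hj, neg_zero]
    have hseg : xs ∈ openSegment ℝ (xs - t1 • x) (xs - t2 • (-x)) := by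
      have hne : t1 + t2 ≠ 0 := by positivity
      refine ⟨t2 / (t1 + t2), t1 / (t1 + t2), by positivity, by positivity, by field_simp; ring, ?_⟩
      ext i
      simp only [Pi.add_apply, Pi.smul_apply, Pi.sub_apply, Pi.neg_apply, smul_eq_mul]
      field_simp
      ring
    have h3 := hvert.2 h1 h2 hseg
    have h4 : t1 • x = 0 := by simpa using h3
    exact (smul_eq_zero.1 h4).resolve_left ht1.ne'
  have hspan : ∀ x : Fin (d + 3) → ℝ, (∀ i, pxRow A i ⬝ᵥ x = 0) → x = 0 :=
    fun x hx => hJspan x fun j _ => hx j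
  have hint : ∀ i (w : Fin (d + 3) → ℤ), pxRow A i ⬝ᵥ (fun j => (w j : ℝ)) = ((A *ᵥ w) i : ℝ) := by
    intro i w
    simp only [mulVec, dotProduct, pxRow]; push_cast; rfl
  -- an optimal integral solution
  obtain ⟨D, hD, cc, hcc⟩ : ∃ D : ℕ, 0 < D ∧ ∃ cc : Fin (d + 3) → ℤ,
      ∀ i, (cc i : ℝ) = (D : ℝ) * (c i : ℝ) := by
    refine ⟨∏ i, (c i).den, Finset.prod_pos fun i _ => (c i).den_pos, ?_⟩
    have : ∀ i, ∃ r : ℤ, (r : ℝ) = ((∏ i, (c i).den : ℕ) : ℝ) * (c i : ℝ) := by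
      intro i
      obtain ⟨e, he⟩ := Finset.dvd_prod_of_mem (fun i => (c i).den) (Finset.mem_univ i)
      refine ⟨(c i).num * e, ?_⟩
      rw [he]
      have h1 : ((c i).den : ℝ) * (c i : ℝ) = ((c i).num : ℝ) := by
        exact_mod_cast Rat.den_mul_eq_num (c i)
      push_cast
      rw [← h1]; ring
    choose cc hcc using this
    exact ⟨cc, hcc⟩
  have hDr : (0 : ℝ) < D := by exact_mod_cast hD
  have hval : ∀ z : Fin (d + 3) → ℤ, ((∑ i, cc i * z i : ℤ) : ℝ) =
      (D : ℝ) * ∑ i, (c i : ℝ) * (z i : ℝ) := by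
    intro z
    push_cast
    rw [Finset.mul_sum]
    refine Finset.sum_congr rfl fun i _ => ?_
    rw [hcc]; ring
  obtain ⟨val, ⟨z1, hz1P, hz1v⟩, hvmax⟩ := Int.exists_greatest_of_bdd
    (P := fun r : ℤ => ∃ z : Fin (d + 3) → ℤ, (fun i => (z i : ℝ)) ∈ P ∧ ∑ i, cc i * z i = r)
    ⟨⌊(D : ℝ) * ∑ i, (c i : ℝ) * xs i⌋, by
      rintro r ⟨z, hz, rfl⟩
      rw [Int.le_floor, hval]
      exact mul_le_mul_of_nonneg_left (hopt _ hz) hDr.le⟩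
    (by obtain ⟨z, hz⟩ := hfeas; exact ⟨_, z, hz, rfl⟩)
  set Opt : Set (Fin (d + 3) → ℤ) := {z | (fun i => (z i : ℝ)) ∈ P ∧
      ∀ w : Fin (d + 3) → ℤ, (fun i => (w i : ℝ)) ∈ P →
        ∑ i, (c i : ℝ) * (w i : ℝ) ≤ ∑ i, (c i : ℝ) * (z i : ℝ)} with hOpt
  have hz1 : z1 ∈ Opt := by
    refine ⟨hz1P, fun w hw => ?_⟩
    have h1 := hvmax _ ⟨w, hw, rfl⟩
    rw [← hz1v] at h1
    have h2 : ((∑ i, cc i * w i : ℤ) : ℝ) ≤ ((∑ i, cc i * z1 i : ℤ) : ℝ) := by exact_mod_cast h1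
    rw [hval, hval] at h2
    exact le_of_mul_le_mul_left h2 hDr
  set Φ : (Fin (d + 3) → ℤ) → ℕ :=
    fun z => ∑ j ∈ Finset.univ.filter (· ∈ J), (b j - (A *ᵥ z) j).toNat with hΦ
  obtain ⟨z, ⟨hzP, hzopt⟩, hzmin⟩ := (measure Φ).wf.has_min Opt ⟨z1, hz1⟩
  refine ⟨z, hzP, hzopt, ?_⟩
  have hzP' := (hmem _).1 hzP
  have hzb : ∀ i, (A *ᵥ z) i ≤ b i := fun i => by
    have := hzP' i
    rw [hint] at this
    exact_mod_cast this
  set y : Fin (d + 3) → ℝ := fun i => xs i - (z i : ℝ) with hy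
  have hyd : ∀ i, pxRow A i ⬝ᵥ y = pxRow A i ⬝ᵥ xs - ((A *ᵥ z) i : ℝ) := fun i => by
    rw [← hint, ← dotProduct_sub]; rfl
  have hbound := px_core hq A hspan y (by
    intro w hw0 hw
    have hadd : ∀ i, (A *ᵥ (z + w)) i = (A *ᵥ z) i + (A *ᵥ w) i := fun i => by
      rw [mulVec_add]; rfl
    have hfe : ∀ i, (A *ᵥ (z + w)) i ≤ b i := by
      intro i
      rw [hadd]
      have h1 := hw i
      rw [hint, hyd] at h1
      have h2 := hxs i
      have h4 : ((A *ᵥ z) i : ℝ) ≤ b i := by exact_mod_cast hzb i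
      have h3 : ((A *ᵥ z) i : ℝ) + ((A *ᵥ w) i : ℝ) < (b i : ℝ) + 1 := by
        rcases le_or_gt 0 (pxRow A i ⬝ᵥ xs - ((A *ᵥ z) i : ℝ)) with h | h
        · linarith [(h1.1 h).1]
        · linarith [h1.2 h]
      have : (A *ᵥ z) i + (A *ᵥ w) i < b i + 1 := by exact_mod_cast h3
      omega
    have hJw : ∀ j ∈ J, 0 ≤ (A *ᵥ w) j := by
      intro j hj
      have h1 := hw j
      have h2 : pxRow A j ⬝ᵥ xs = (b j : ℝ) := hj
      rw [hint, hyd, h2] at h1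
      have h4 : ((A *ᵥ z) j : ℝ) ≤ b j := by exact_mod_cast hzb j
      have h3 := (h1.1 (by linarith)).2
      have : -1 < (A *ᵥ w) j := by exact_mod_cast h3
      omega
    have hc0 := hcw (fun j => (w j : ℝ)) fun j hj => by rw [hint]; exact_mod_cast hJw j hj
    have hfeP : (fun i => ((z + w) i : ℝ)) ∈ P := by
      rw [hmem]
      intro i
      rw [hint]; exact_mod_cast hfe i
    have hzw : z + w ∈ Opt := by
      refine ⟨hfeP, fun u hu => (hzopt u hu).trans ?_⟩
      have : ∑ i, (c i : ℝ) * ((z + w) i : ℝ) =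
          ∑ i, (c i : ℝ) * (z i : ℝ) + ∑ i, (c i : ℝ) * (w i : ℝ) := by
        rw [← Finset.sum_add_distrib]
        refine Finset.sum_congr rfl fun i _ => ?_
        simp only [Pi.add_apply]; push_cast; ring
      rw [this]; linarith
    apply hzmin _ hzw
    change Φ (z + w) < Φ z
    obtain ⟨j, hj, hjw⟩ : ∃ j ∈ J, (A *ᵥ w) j ≠ 0 := by
      by_contra hcon
      push Not at hcon
      apply hw0
      have := hJspan (fun j => (w j : ℝ)) fun j hj => by rw [hint, hcon j hj]; simp
      funext i
      have := congrFun this i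
      simpa using this
    refine Finset.sum_lt_sum (fun i hi => ?_) ⟨j, by simpa using hj, ?_⟩
    · have := hJw i (by simpa using hi)
      have := hfe i
      rw [hadd] at *
      omega
    · have := hJw j hj
      have := hfe j
      rw [hadd] at *
      omega)
  have hkn : ((d + 3 : ℕ) : ℝ) = 3 * ((k : ℝ) + 1) := by rw [hq]; push_cast; ring
  have hfin : (Real.sqrt 2 / 3 * ((d + 3 : ℕ) : ℝ)) * (maxMinor A (d + 3 - 1) : ℝ) =
      ((k : ℝ) + 1) * (√2 * (maxMinor A (d + 2) : ℝ)) := by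
    rw [hkn]
    change (√2 / 3 * (3 * ((k : ℝ) + 1))) * (maxMinor A (d + 2) : ℝ) = _
    ring
  rw [hfin, pi_norm_lt_iff ((abs_nonneg _).trans_lt (hbound 0))]
  intro i
  exact hbound i
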